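/- Let V be a nontrivial finite-dimensional complex inner product space, H an infinite-dimensional complex Hilbert space, a, b, c ∈ ℂ with b ≠ 0, and Γ : ℕ → B(V, H) a family of bounded linear operators from V to H (with the convention Γ_{−1} = 0) such that: (1) the linear span of { Γ_n v : n ∈ ℕ, v ∈ V } is dense in H; (2) for all m, n ∈ ℕ, conj(c)·(m−1)·Γ_{m−1}*Γ_n + c·(n−1)·Γ_m*Γ_{n−1} + (a·n + conj(a)·m)·Γ_m*Γ_n + b·(n+1)·Γ_m*Γ_{n+1} + conj(b)·(m+1)·Γ_{m+1}*Γ_n = 0, where Γ_m* denotes the adjoint. Then the family (Γ_n)_{n∈ℕ} is linearly independent in B(V,H); in particular Γ_n ≠ 0 for every n. -/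

import Mathlib

open Complex ContinuousLinearMap

section helpers
variable {V : Type*} [NormedAddCommGroup V] [InnerProductSpace ℂ V] [FiniteDimensional ℂ V]
    {H : Type*} [NormedAddCommGroup H] [InnerProductSpace ℂ H] [CompleteSpace H]

/-- An antisymmetric assignment `Γ n ↦ E n` respects linear relations. -/
theorem aux_relation (Γ E : ℕ → (V →L[ℂ] H))
    (hdense : Dense (↑(Submodule.span ℂ {x : H | ∃ (n : ℕ) (v : V), Γ n v = x}) : Set H))
    (hE : ∀ m n : ℕ, ∀ v w : V, inner ℂ (Γ m v) (E n w) + inner ℂ (E m v) (Γ n w) = 0)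
    (s : Finset ℕ) (f : ℕ → ℂ) (h : ∑ i ∈ s, f i • Γ i = 0) : ∑ i ∈ s, f i • E i = 0 := by
  ext w
  apply hdense.eq_zero_of_inner_right (𝕜 := ℂ)
  intro y hy
  induction hy using Submodule.span_induction with
  | zero => simp
  | add x y _ _ hx hy => rw [inner_add_left, hx, hy, add_zero]
  | smul r x _ hx => rw [inner_smul_left, hx, mul_zero]
  | mem x hx =>
    obtain ⟨m, v, rfl⟩ := hx
    have h1 : inner ℂ (E m v) ((∑ i ∈ s, f i • Γ i) w) = 0 := by rw [h]; simp
    simp only [ContinuousLinearMap.sum_apply, ContinuousLinearMap.smul_apply, inner_sum,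
      inner_smul_right] at h1 ⊢
    rw [← neg_eq_zero, ← h1, ← Finset.sum_neg_distrib]
    refine Finset.sum_congr rfl fun i _ => ?_
    rw [eq_neg_of_add_eq_zero_left (hE m i v w)]
    ring

/-- Operators with finitely generated span cannot have dense total range. -/
theorem aux_finite (Γ : ℕ → (V →L[ℂ] H)) (N : ℕ)
    (hdense : Dense (↑(Submodule.span ℂ {x : H | ∃ (n : ℕ) (v : V), Γ n v = x}) : Set H))
    (h : ∀ n, Γ n ∈ Submodule.span ℂ (Γ '' Set.Iio N)) : FiniteDimensional ℂ H := by
  let W : Submodule ℂ H := ⨆ i : Fin N, LinearMap.range (Γ i : V →ₗ[ℂ] H)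
  have hW : ∀ T ∈ Submodule.span ℂ (Γ '' Set.Iio N), ∀ v, T v ∈ W := by
    intro T hT v
    induction hT using Submodule.span_induction with
    | zero => simp
    | add x y _ _ hx hy => exact W.add_mem hx hy
    | smul r x _ hx => exact W.smul_mem r hx
    | mem x hx =>
      obtain ⟨i, hi, rfl⟩ := hx
      exact Submodule.mem_iSup_of_mem (p := fun i : Fin N => LinearMap.range (Γ i : V →ₗ[ℂ] H))
        ⟨i, hi⟩ ⟨v, rfl⟩
  have hle : Submodule.span ℂ {x : H | ∃ (n : ℕ) (v : V), Γ n v = x} ≤ W := by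
    rw [Submodule.span_le]
    rintro x ⟨n, v, rfl⟩
    exact hW _ (h n) v
  have hfd : FiniteDimensional ℂ W := inferInstance
  have hcl : IsClosed (W : Set H) := W.closed_of_finiteDimensional
  have htop : W = ⊤ := by
    have hd : Dense (W : Set H) := hdense.mono hle
    apply SetLike.coe_injective
    rw [← hcl.closure_eq, hd.closure_eq]; rfl
  rw [htop] at hfd
  exact Module.finite_def.mpr (Module.Finite.iff_fg.mp hfd)

end helpers

/-- Proposition 6.2(iii): if `b ≠ 0` and the operators `Γ_n : V → H` (with `Γ_{-1} = 0`)
satisfy the two-variable difference equation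
`c̄(m−1)Γ_{m−1}*Γ_n + c(n−1)Γ_m*Γ_{n−1} + (an + ām)Γ_m*Γ_n + b(n+1)Γ_m*Γ_{n+1}
  + b̄(m+1)Γ_{m+1}*Γ_n = 0`
and the span of `{Γ_n v}` is dense in the infinite-dimensional Hilbert space `H`, then the
family `(Γ_n)` is linearly independent; in particular `Γ_n ≠ 0` for every `n`. -/
theorem gamma_linearIndependent_of_b_ne_zero
    {V : Type*} [NormedAddCommGroup V] [InnerProductSpace ℂ V]
    [FiniteDimensional ℂ V] [Nontrivial V]
    {H : Type*} [NormedAddCommGroup H] [InnerProductSpace ℂ H] [CompleteSpace H]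
    (hH : ¬ FiniteDimensional ℂ H)
    (a b c : ℂ) (hb : b ≠ 0)
    (Γ : ℕ → (V →L[ℂ] H))
    (Γ' : ℤ → (V →L[ℂ] H))
    (hΓ'nat : ∀ n : ℕ, Γ' (n : ℤ) = Γ n)
    (hΓ'neg : ∀ k : ℤ, k < 0 → Γ' k = 0)
    (hdense : Dense (↑(Submodule.span ℂ {x : H | ∃ (n : ℕ) (v : V), Γ n v = x}) : Set H))
    (hrec : ∀ m n : ℕ,
      ((starRingEnd ℂ) c * ((m : ℂ) - 1)) •
          ((ContinuousLinearMap.adjoint (Γ' ((m : ℤ) - 1))).comp (Γ' (n : ℤ)))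
        + (c * ((n : ℂ) - 1)) •
          ((ContinuousLinearMap.adjoint (Γ' (m : ℤ))).comp (Γ' ((n : ℤ) - 1)))
        + (a * (n : ℂ) + (starRingEnd ℂ) a * (m : ℂ)) •
          ((ContinuousLinearMap.adjoint (Γ' (m : ℤ))).comp (Γ' (n : ℤ)))
        + (b * ((n : ℂ) + 1)) •
          ((ContinuousLinearMap.adjoint (Γ' (m : ℤ))).comp (Γ' ((n : ℤ) + 1)))
        + ((starRingEnd ℂ) b * ((m : ℂ) + 1)) •
          ((ContinuousLinearMap.adjoint (Γ' ((m : ℤ) + 1))).comp (Γ' (n : ℤ)))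
        = 0) :
    LinearIndependent ℂ Γ ∧ ∀ n : ℕ, Γ n ≠ 0 := by
  set E : ℕ → (V →L[ℂ] H) := fun n => (c * ((n : ℂ) - 1)) • Γ' ((n : ℤ) - 1)
    + (a * (n : ℂ)) • Γ n + (b * ((n : ℂ) + 1)) • Γ (n + 1) with hEdef
  have hE : ∀ m n : ℕ, ∀ v w : V, inner ℂ (Γ m v) (E n w) + inner ℂ (E m v) (Γ n w) = 0 := by
    intro m n v w
    have h := congrArg (fun T : V →L[ℂ] V => inner ℂ v (T w)) (hrec m n)
    have e1 : ∀ k : ℕ, Γ' ((k : ℤ) + 1) = Γ (k + 1) := fun k => by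
      rw [← hΓ'nat]; push_cast; rfl
    simp only [ContinuousLinearMap.add_apply, ContinuousLinearMap.smul_apply,
      ContinuousLinearMap.comp_apply, inner_add_right, inner_smul_right,
      ContinuousLinearMap.adjoint_inner_right, ContinuousLinearMap.zero_apply,
      inner_zero_right, e1, hΓ'nat] at h
    simp only [hEdef, ContinuousLinearMap.add_apply, ContinuousLinearMap.smul_apply,
      inner_add_right, inner_smul_right, inner_add_left, inner_smul_left, map_mul, map_sub,
      map_add, map_one, Complex.conj_natCast]
    linear_combination h
  have hrel := aux_relation Γ E hdense hE
  have hmem : ∀ i n, i < n → Γ i ∈ Submodule.span ℂ (Γ '' Set.Iio n) := fun i n hi =>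
    Submodule.subset_span ⟨i, hi, rfl⟩
  have hpart : ∀ i n, i < n → (c * ((i : ℂ) - 1)) • Γ' ((i : ℤ) - 1)
      + (a * (i : ℂ)) • Γ i ∈ Submodule.span ℂ (Γ '' Set.Iio n) := by
    intro i n hi
    refine Submodule.add_mem _ (Submodule.smul_mem _ _ ?_) (Submodule.smul_mem _ _ (hmem i n hi))
    rcases i with _ | i
    · rw [hΓ'neg _ (by simp)]; exact Submodule.zero_mem _
    · have : ((i + 1 : ℕ) : ℤ) - 1 = (i : ℤ) := by push_cast; ring
      rw [this, hΓ'nat]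
      exact hmem i n (by omega)
  -- from a relation with top index `N` we get that `Γ (N + 1)` is in the span of the previous ones
  have hstep : ∀ (N : ℕ) (f : ℕ → ℂ), f N ≠ 0 → ∑ i ∈ Finset.range (N + 1), f i • Γ i = 0 →
      ∑ i ∈ Finset.range (N + 2), (if i = N + 1 then f N * (b * ((N : ℂ) + 1)) else 0) • Γ i ∈
        Submodule.span ℂ (Γ '' Set.Iio (N + 1)) := by
    intro N f hf h
    have h2 := hrel _ f h
    rw [Finset.sum_range_succ] at h2
    simp only [ite_smul, zero_smul, Finset.sum_ite_eq', Finset.mem_range]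
    rw [if_pos (by omega)]
    have h3 : (f N * (b * ((N : ℂ) + 1))) • Γ (N + 1) =
        -(∑ i ∈ Finset.range N, f i • E i + f N • ((c * ((N : ℂ) - 1)) • Γ' ((N : ℤ) - 1)
          + (a * (N : ℂ)) • Γ N)) := by
      rw [eq_neg_iff_add_eq_zero, ← h2]
      simp only [hEdef, smul_add, smul_smul]
      abel
    rw [h3]
    refine Submodule.neg_mem _ (Submodule.add_mem _ (Submodule.sum_mem _ fun i hi => ?_)
      (Submodule.smul_mem _ _ (hpart _ _ (by omega))))
    have hi' := Finset.mem_range.mp hi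
    exact Submodule.smul_mem _ _ (Submodule.add_mem _ (hpart _ _ (by omega))
      (Submodule.smul_mem _ _ (hmem _ _ (by omega))))
  have hstep' : ∀ (N : ℕ) (f : ℕ → ℂ), f N ≠ 0 → ∑ i ∈ Finset.range (N + 1), f i • Γ i = 0 →
      Γ (N + 1) ∈ Submodule.span ℂ (Γ '' Set.Iio (N + 1)) := by
    intro N f hf h
    have := hstep N f hf h
    simp only [ite_smul, zero_smul, Finset.sum_ite_eq', Finset.mem_range] at this
    rw [if_pos (by omega)] at this
    refine (Submodule.smul_mem_iff _ ?_).mp this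
    exact mul_ne_zero hf (mul_ne_zero hb (Nat.cast_add_one_ne_zero N))
  -- membership in the span gives a relation
  have hspan : ∀ N, Γ N ∈ Submodule.span ℂ (Γ '' Set.Iio N) →
      ∃ f : ℕ → ℂ, f N ≠ 0 ∧ ∑ i ∈ Finset.range (N + 1), f i • Γ i = 0 := by
    intro N hN
    have : (Set.Iio N) = ((Finset.range N : Finset ℕ) : Set ℕ) := by ext; simp
    rw [this, Submodule.mem_span_image_finset_iff_exists_fun] at hN
    obtain ⟨g, hg⟩ := hN
    refine ⟨fun i => if h : i ∈ Finset.range N then g ⟨i, h⟩ else -1, by simp, ?_⟩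
    rw [Finset.sum_range_succ]
    beta_reduce
    rw [dif_neg (Finset.notMem_range_self (n := N)), neg_smul, one_smul, add_neg_eq_zero, ← hg, ← Finset.sum_coe_sort]
    refine Finset.sum_congr rfl fun i _ => ?_
    rw [dif_pos i.2]
  have hno : ∀ (N : ℕ) (f : ℕ → ℂ), f N ≠ 0 → ∑ i ∈ Finset.range (N + 1), f i • Γ i = 0 →
      False := by
    intro N f hf h
    have hall : ∀ k, Γ (N + 1 + k) ∈ Submodule.span ℂ (Γ '' Set.Iio (N + 1 + k)) := by
      intro k
      induction k with
      | zero => exact hstep' N f hf h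
      | succ k ih =>
        obtain ⟨g, hg, hg'⟩ := hspan _ ih
        exact hstep' _ g hg hg'
    refine hH (aux_finite Γ (N + 1) hdense fun n => ?_)
    induction n using Nat.strong_induction_on with
    | _ n ih =>
      by_cases hn : n < N + 1
      · exact hmem _ _ hn
      · obtain ⟨k, rfl⟩ := Nat.exists_eq_add_of_le (not_lt.mp hn)
        have hle : Submodule.span ℂ (Γ '' Set.Iio (N + 1 + k)) ≤
            Submodule.span ℂ (Γ '' Set.Iio (N + 1)) := by
          rw [Submodule.span_le]
          rintro _ ⟨i, hi, rfl⟩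
          exact ih i hi
        exact hle (hall k)
  have hLI : LinearIndependent ℂ Γ := by
    rw [linearIndependent_iff']
    intro s g hg
    by_contra! hcon
    obtain ⟨i, his, hi⟩ := hcon
    let t := s.filter fun i => g i ≠ 0
    have ht : t.Nonempty := ⟨i, by simp [t, his, hi]⟩
    have hmax := t.max'_mem ht
    set M := t.max' ht with hM
    have hM' : M ∈ s ∧ g M ≠ 0 := by simpa [t] using hmax
    refine hno M (fun i => if i ∈ t then g i else 0) (by simp only [if_pos hmax]; exact hM'.2) ?_
    have hsub : t ⊆ Finset.range (M + 1) := fun j hj => by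
      have := t.le_max' j hj
      simp only [Finset.mem_range]; omega
    rw [← Finset.sum_subset hsub (fun j _ hj => by simp [hj])]
    rw [← hg, ← Finset.sum_subset (Finset.filter_subset (fun i => g i ≠ 0) s)
      (f := fun i => g i • Γ i) (fun j hj hj' => by
        have : g j = 0 := by
          by_contra hne
          exact hj' (Finset.mem_filter.mpr ⟨hj, hne⟩)
        simp [this])]
    exact Finset.sum_congr rfl fun j hj => by
      have hjt : j ∈ t := hj
      simp only [if_pos hjt]
  exact ⟨hLI, fun n => hLI.ne_zero n⟩
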